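/- Let X = {0,1}^ℕ with the shift T, W = {w_i}_{i∈I} a countable set of finite words, a = (a_i)_{i∈I} non-negative numbers with M(a,W) ≠ ∅, and for each n let W_n = {w ∈ W : |w| ≤ n}. Then the maximal measure-theoretic entropy over M(a,W_n) converges, as n → ∞, to the maximal measure-theoretic entropy over M(a,W): lim_{n→∞} max{ h_μ : μ ∈ M(a,W_n) } = max{ h_μ : μ ∈ M(a,W) }. -/

import Mathlib

open MeasureTheory Filter Topology Set
open scoped ENNReal NNReal

/-!  General definitions: Bowen topological entropy (via covers by Bowen balls),
measure-theoretic (Kolmogorov–Sinai) entropy, generic points, saturated systems,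
and the specification property. -/

variable {X : Type*}

/-- The Bowen ball of center `x`, order `n`, radius `ε` (for the metric
`d_n(x,y) = max_{0 ≤ j < n} d(T^j x, T^j y)`). -/
def bowenBall [PseudoMetricSpace X] (T : X → X) (x : X) (n : ℕ) (ε : ℝ) : Set X :=
  {y | ∀ j < n, dist (T^[j] x) (T^[j] y) < ε}

/-- `H_n^s(Z,ε)`: infimum of `Σ_i exp(-s n_i)` over countable covers of `Z` by Bowen balls
`B_{n_i}(x_i,ε)` with all `n_i ≥ n`. -/
noncomputable def bowenH [PseudoMetricSpace X] (T : X → X) (Z : Set X) (s ε : ℝ) (n : ℕ) :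
    ℝ≥0∞ :=
  ⨅ (C : Set (X × ℕ)) (_ : C.Countable) (_ : ∀ p ∈ C, n ≤ p.2)
    (_ : Z ⊆ ⋃ p ∈ C, bowenBall T p.1 p.2 ε),
    ∑' p : C, ENNReal.ofReal (Real.exp (-s * ((p : X × ℕ).2 : ℝ)))

/-- `h_top(Z,ε)`: the critical exponent of `s ↦ H^s(Z,ε) = sup_n H_n^s(Z,ε)`. -/
noncomputable def bowenEntropyRes [PseudoMetricSpace X] (T : X → X) (Z : Set X) (ε : ℝ) :
    ℝ≥0∞ :=
  sInf ((fun s : ℝ≥0 => (s : ℝ≥0∞)) '' {s : ℝ≥0 | (⨆ n, bowenH T Z (s : ℝ) ε n) = 0})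

/-- Bowen topological entropy of a subset `Z`: `h_top(Z) = lim_{ε → 0} h_top(Z,ε)`
(the limit being a supremum by monotonicity in `ε`). -/
noncomputable def bowenEntropy [PseudoMetricSpace X] (T : X → X) (Z : Set X) : ℝ≥0∞ :=
  ⨆ (ε : ℝ) (_ : 0 < ε), bowenEntropyRes T Z ε

/-- Entropy of the partition `P ∨ T⁻¹P ∨ ⋯ ∨ T⁻⁽ⁿ⁻¹⁾P`, where a countable partition is
encoded as a function `P : X → ℕ`: it is the Shannon entropy of the map
`x ↦ (P x, P (T x), …, P (Tⁿ⁻¹ x))`. -/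
noncomputable def partInfo [MeasurableSpace X] (T : X → X) (μ : Measure X) (P : X → ℕ)
    (n : ℕ) : ℝ≥0∞ :=
  ∑' l : List ℕ, ENNReal.ofReal (Real.negMulLog
    ((μ ((fun x => (List.range n).map fun j => P (T^[j] x)) ⁻¹' {l})).toReal))

/-- Measure-theoretic (Kolmogorov–Sinai) entropy `h_μ(T)`: supremum over finite measurable
partitions `P` of `lim_n (1/n) H_μ(P ∨ T⁻¹P ∨ ⋯ ∨ T⁻⁽ⁿ⁻¹⁾P)` (the limit exists by
subadditivity, so it may be written as a `liminf`). -/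
noncomputable def ksEntropy [MeasurableSpace X] (T : X → X) (μ : Measure X) : ℝ≥0∞ :=
  ⨆ (P : X → ℕ) (_ : Measurable P) (_ : (Set.range P).Finite),
    Filter.atTop.liminf fun n : ℕ => partInfo T μ P n / (n : ℝ≥0∞)

/-- `x` is a generic point for `μ` : the empirical measures `(1/n) Σ_{j<n} δ_{T^j x}`
converge to `μ` in the weak-star topology, i.e. Birkhoff averages of every continuous
function converge to its integral. -/
def IsGeneric [TopologicalSpace X] [MeasurableSpace X] (T : X → X) (μ : Measure X)
    (x : X) : Prop :=
  ∀ f : C(X, ℝ), Tendsto (fun n : ℕ => (∑ j ∈ Finset.range n, f (T^[j] x)) / (n : ℝ))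
    atTop (𝓝 (∫ y, f y ∂μ))

/-- `μ ∈ V(x)` : `μ` is a weak-star limit point of the empirical measures of `x`. -/
def IsLimitMeasure [TopologicalSpace X] [MeasurableSpace X] (T : X → X) (x : X)
    (μ : Measure X) : Prop :=
  ∃ φ : ℕ → ℕ, StrictMono φ ∧ ∀ f : C(X, ℝ),
    Tendsto (fun m : ℕ => (∑ j ∈ Finset.range (φ m), f (T^[j] x)) / (φ m : ℝ))
      atTop (𝓝 (∫ y, f y ∂μ))

/-- A system is saturated if `h_top(G_μ) = h_μ` for every invariant Borel probability
measure `μ`. -/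
def Saturated [PseudoMetricSpace X] [MeasurableSpace X] (T : X → X) : Prop :=
  ∀ μ : Measure X, IsProbabilityMeasure μ → MeasurePreserving T μ μ →
    bowenEntropy T {x | IsGeneric T μ x} = ksEntropy T μ

/-- The specification property. -/
def SpecificationProperty [PseudoMetricSpace X] (T : X → X) : Prop :=
  ∀ ε : ℝ, 0 < ε → ∃ m : ℕ, 1 ≤ m ∧
    ∀ k : ℕ, 2 ≤ k → ∀ x : ℕ → X, ∀ a b : ℕ → ℕ,
      (∀ i < k, a i ≤ b i) →
      (∀ i, i + 1 < k → b i + m ≤ a (i + 1)) →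
      ∃ y : X, ∀ i < k, ∀ n ≤ b i - a i,
        dist (T^[a i + n] y) (T^[n] (x i)) < ε

/-! Symbolic dynamics on `X = {0,1}^ℕ`. -/

/-- The metric `d(x,y) = (1/2)^(first difference)` on the symbolic space `{0,1}^ℕ`. -/
noncomputable instance : MetricSpace (ℕ → Bool) := PiNat.metricSpace

/-- The shift map on `{0,1}^ℕ`. -/
def shift : (ℕ → Bool) → ℕ → Bool := fun x n => x (n + 1)

/-- The cylinder `[w]` of all sequences beginning with the finite word `w`. -/
def cyl (w : List Bool) : Set (ℕ → Bool) :=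
  {x | ∀ i : Fin w.length, x i.1 = w.get i}

/-- `R(x,[w]) = r` : the frequency of visits of the orbit of `x` to the cylinder `[w]`
exists and equals `r`. -/
def hasFreq (w : List Bool) (x : ℕ → Bool) (r : ℝ) : Prop :=
  Filter.Tendsto (fun n : ℕ =>
      (∑ j ∈ Finset.range n, (cyl w).indicator (fun _ => (1 : ℝ)) (shift^[j] x)) / (n : ℝ))
    Filter.atTop (nhds r)

/-!
By the Kolmogorov–Sinai theorem, the entropy of an invariant measure is the infimum over `k` of the
normalized entropies `H_μ(ξ, ξ ∘ T, …, ξ ∘ Tᵏ⁻¹) / k` along a generator `ξ`. For a clopen generator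
each of these is a continuous function of `μ`, so `μ ↦ h_μ(T)` is upper semicontinuous for the
weak-* topology. The sets `M(a, W_n)` are compact and decrease to `M(a, W)`, and along such a
sequence the suprema of an upper semicontinuous function converge to the supremum over the
intersection.
-/

section ShannonEntropy

variable {Ω α β γ : Type*} [MeasurableSpace Ω] {μ : Measure Ω} [Fintype α] [Fintype β] [Fintype γ]

/-- The Shannon entropy `H_μ(f)` of the finite partition of `Ω` into the fibres of `f`. -/
noncomputable def shannonEntropy (μ : Measure Ω) (f : Ω → α) : ℝ :=
  ∑ i, Real.negMulLog (μ.real (f ⁻¹' {i}))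

/-- The conditional entropy `H_μ(f | g)`, defined through the chain rule as
`H_μ(f, g) - H_μ(g)`. -/
noncomputable def condEntropy (μ : Measure Ω) (f : Ω → α) (g : Ω → β) : ℝ :=
  shannonEntropy μ (fun x => (f x, g x)) - shannonEntropy μ g

lemma shannonEntropy_nonneg [IsZeroOrProbabilityMeasure μ] (f : Ω → α) :
    0 ≤ shannonEntropy μ f :=
  Finset.sum_nonneg fun _ _ => Real.negMulLog_nonneg measureReal_nonneg measureReal_le_one

lemma shannonEntropy_const [IsProbabilityMeasure μ] (i : α) :
    shannonEntropy μ (fun _ => i) = 0 := by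
  classical
  refine Finset.sum_eq_zero fun j _ => ?_
  by_cases h : i = j <;> simp [h]

lemma mul_log_add_log_sub_log_sub_log_le {p a b c : ℝ} (hp : 0 ≤ p) (ha : p ≤ a) (hb : p ≤ b)
    (hc : p ≤ c) :
    p * (Real.log a + Real.log b - Real.log c - Real.log p) ≤ a * b / c - p := by
  rcases hp.eq_or_lt with rfl | hp
  · simpa using by positivity
  have ha' : 0 < a := hp.trans_le ha
  have hb' : 0 < b := hp.trans_le hb
  have hc' : 0 < c := hp.trans_le hc
  calc p * (Real.log a + Real.log b - Real.log c - Real.log p)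
      = p * Real.log (a * b / c / p) := by
        rw [Real.log_div (by positivity) hp.ne', Real.log_div (by positivity) hc'.ne',
          Real.log_mul ha'.ne' hb'.ne']
    _ ≤ p * (a * b / c / p - 1) := by gcongr; exact Real.log_le_sub_one_of_pos (by positivity)
    _ = a * b / c - p := by field_simp

variable [MeasurableSpace α] [MeasurableSingletonClass α]
  [MeasurableSpace β] [MeasurableSingletonClass β] [MeasurableSpace γ] [MeasurableSingletonClass γ]

lemma shannonEntropy_comp_measurePreserving {Ω' : Type*} [MeasurableSpace Ω'] {ν : Measure Ω'}
    {T : Ω → Ω'} (hT : MeasurePreserving T μ ν) {f : Ω' → α} (hf : Measurable f) :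
    shannonEntropy μ (fun x => f (T x)) = shannonEntropy ν f :=
  Finset.sum_congr rfl fun i _ => congrArg Real.negMulLog <|
    hT.measureReal_preimage (hf (measurableSet_singleton i)).nullMeasurableSet

lemma condEntropy_comp_measurePreserving {Ω' : Type*} [MeasurableSpace Ω'] {ν : Measure Ω'}
    {T : Ω → Ω'} (hT : MeasurePreserving T μ ν) {f : Ω' → α} (hf : Measurable f) {g : Ω' → β}
    (hg : Measurable g) :
    condEntropy μ (fun x => f (T x)) (fun x => g (T x)) = condEntropy ν f g :=
  congrArg₂ (· - ·) (shannonEntropy_comp_measurePreserving hT (hf.prodMk hg))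
    (shannonEntropy_comp_measurePreserving hT hg)

lemma tendsto_shannonEntropy_of_tendsto_measureReal_ne [IsFiniteMeasure μ] {ι : Type*}
    {l : Filter ι} {F : ι → Ω → α} (hF : ∀ i, Measurable (F i)) {f : Ω → α} (hf : Measurable f)
    (h : Tendsto (fun i => μ.real {x | F i x ≠ f x}) l (𝓝 0)) :
    Tendsto (fun i => shannonEntropy μ (F i)) l (𝓝 (shannonEntropy μ f)) := by
  refine tendsto_finsetSum _ fun u _ => (Real.continuous_negMulLog.tendsto _).comp ?_
  refine tendsto_iff_dist_tendsto_zero.2 (squeeze_zero (fun _ => dist_nonneg) (fun i => ?_) h)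
  have hu : MeasurableSet {u} := measurableSet_singleton u
  have hsub : symmDiff (F i ⁻¹' {u}) (f ⁻¹' {u}) ⊆ {x | F i x ≠ f x} := by
    rintro x (⟨hx, hx'⟩ | ⟨hx, hx'⟩) heq
    · exact hx' (heq.symm.trans hx)
    · exact hx' (heq.trans hx)
  exact (abs_measureReal_sub_le_measureReal_symmDiff (hF i hu).nullMeasurableSet
    (hf hu).nullMeasurableSet).trans (measureReal_mono hsub)

variable [IsFiniteMeasure μ] {f : Ω → α} {g : Ω → β} {h : Ω → γ}

lemma sum_measureReal_fiber_mul_comp {κ : Type*} [Fintype κ] (hf : Measurable f) (π : α → κ)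
    (φ : κ → ℝ) :
    ∑ i, μ.real (f ⁻¹' {i}) * φ (π i) = ∑ k, μ.real ((fun x => π (f x)) ⁻¹' {k}) * φ k := by
  classical
  rw [← Finset.sum_fiberwise Finset.univ π]
  refine Finset.sum_congr rfl fun k _ => ?_
  have hk : (fun x => π (f x)) ⁻¹' {k} = f ⁻¹' ↑({i | π i = k} : Finset α) := by
    ext x
    simp
  rw [hk, ← sum_measureReal_preimage_singleton _ fun i _ => hf (measurableSet_singleton i),
    Finset.sum_mul]
  exact Finset.sum_congr rfl fun i hi => by rw [(Finset.mem_filter.1 hi).2]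

omit [Fintype β] in
lemma sum_measureReal_fiber_prodMk (hf : Measurable f) (hg : Measurable g) (j : β) :
    ∑ i, μ.real ((fun x => (f x, g x)) ⁻¹' {(i, j)}) = μ.real (g ⁻¹' {j}) := by
  have hj : g ⁻¹' {j} = (fun x => (f x, g x)) ⁻¹' ↑(Finset.univ ×ˢ {j} : Finset (α × β)) := by
    ext x
    simp [eq_comm]
  rw [hj, ← sum_measureReal_preimage_singleton _
    fun z _ => (hf.prodMk hg) (measurableSet_singleton z), Finset.sum_product]
  simp

lemma sum_measureReal_fiber_mul_div (hf : Measurable f) (hg : Measurable g) (hh : Measurable h) :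
    ∑ z : (α × β) × γ, μ.real ((fun x => (f x, h x)) ⁻¹' {(z.1.1, z.2)}) *
        μ.real ((fun x => (g x, h x)) ⁻¹' {(z.1.2, z.2)}) / μ.real (h ⁻¹' {z.2}) =
      ∑ z, μ.real ((fun x => ((f x, g x), h x)) ⁻¹' {z}) := by
  have hF : Measurable fun x => ((f x, g x), h x) := (hf.prodMk hg).prodMk hh
  calc ∑ z : (α × β) × γ, μ.real ((fun x => (f x, h x)) ⁻¹' {(z.1.1, z.2)}) *
        μ.real ((fun x => (g x, h x)) ⁻¹' {(z.1.2, z.2)}) / μ.real (h ⁻¹' {z.2})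
      = ∑ k, (∑ i, μ.real ((fun x => (f x, h x)) ⁻¹' {(i, k)})) *
          (∑ j, μ.real ((fun x => (g x, h x)) ⁻¹' {(j, k)})) / μ.real (h ⁻¹' {k}) := by
        rw [Fintype.sum_prod_type_right]
        simp only [Fintype.sum_prod_type, Fintype.sum_mul_sum, Finset.sum_div]
    _ = ∑ k, μ.real (h ⁻¹' {k}) := by
        simp only [sum_measureReal_fiber_prodMk hf hh, sum_measureReal_fiber_prodMk hg hh,
          mul_self_div_self]
    _ = ∑ z, μ.real ((fun x => ((f x, g x), h x)) ⁻¹' {z}) := by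
        simpa using (sum_measureReal_fiber_mul_comp (μ := μ) hF Prod.snd fun _ => 1).symm

omit [IsFiniteMeasure μ] [MeasurableSpace α] [MeasurableSingletonClass α] in
lemma shannonEntropy_eq_sum (f : Ω → α) :
    shannonEntropy μ f = ∑ i, μ.real (f ⁻¹' {i}) * -Real.log (μ.real (f ⁻¹' {i})) := by
  simp only [shannonEntropy, Real.negMulLog, neg_mul, mul_neg]

lemma shannonEntropy_comp_eq_sum {κ : Type*} [Fintype κ] (hf : Measurable f) (π : α → κ) :
    shannonEntropy μ (fun x => π (f x)) =
      ∑ i, μ.real (f ⁻¹' {i}) * -Real.log (μ.real ((fun x => π (f x)) ⁻¹' {π i})) := by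
  rw [sum_measureReal_fiber_mul_comp hf π
    fun k => -Real.log (μ.real ((fun x => π (f x)) ⁻¹' {k}))]
  exact shannonEntropy_eq_sum _

omit [Fintype α] [MeasurableSpace α] [MeasurableSingletonClass α] in
lemma measureReal_fiber_le_comp {κ : Type*} (f : Ω → α) (π : α → κ) (i : α) :
    μ.real (f ⁻¹' {i}) ≤ μ.real ((fun x => π (f x)) ⁻¹' {π i}) :=
  measureReal_mono fun _ hx => congrArg π hx

lemma shannonEntropy_comp_le {κ : Type*} [Fintype κ] (hf : Measurable f) (π : α → κ) :
    shannonEntropy μ (fun x => π (f x)) ≤ shannonEntropy μ f := by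
  rw [shannonEntropy_comp_eq_sum hf π, shannonEntropy_eq_sum f]
  refine Finset.sum_le_sum fun i _ => ?_
  rcases (measureReal_nonneg : 0 ≤ μ.real (f ⁻¹' {i})).eq_or_lt with hi | hi
  · simp [← hi]
  · exact mul_le_mul_of_nonneg_left
      (neg_le_neg (Real.log_le_log hi (measureReal_fiber_le_comp f π i))) hi.le

/-- Strong subadditivity of entropy: the inequality `log t ≤ t - 1` at
`t = P(f, h) P(g, h) / (P(h) P(f, g, h))`, averaged over the values of `(f, g, h)`. -/
lemma condEntropy_prodMk_le (hf : Measurable f) (hg : Measurable g) (hh : Measurable h) :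
    condEntropy μ (fun x => (f x, g x)) h ≤ condEntropy μ f h + condEntropy μ g h := by
  let F : Ω → (α × β) × γ := fun x => ((f x, g x), h x)
  have hF : Measurable F := (hf.prodMk hg).prodMk hh
  have hfgh : shannonEntropy μ (fun x => ((f x, g x), h x)) = _ := shannonEntropy_eq_sum F
  have hfh : shannonEntropy μ (fun x => (f x, h x)) = _ :=
    shannonEntropy_comp_eq_sum hF fun z => (z.1.1, z.2)
  have hgh : shannonEntropy μ (fun x => (g x, h x)) = _ :=
    shannonEntropy_comp_eq_sum hF fun z => (z.1.2, z.2)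
  have hh' : shannonEntropy μ h = _ := shannonEntropy_comp_eq_sum hF Prod.snd
  have hpointwise := Finset.sum_le_sum fun (z : (α × β) × γ) (_ : z ∈ Finset.univ) =>
    mul_log_add_log_sub_log_sub_log_le (measureReal_nonneg (μ := μ))
      (measureReal_fiber_le_comp (μ := μ) F (fun z => (z.1.1, z.2)) z)
      (measureReal_fiber_le_comp (μ := μ) F (fun z => (z.1.2, z.2)) z)
      (measureReal_fiber_le_comp (μ := μ) F Prod.snd z)
  rw [Finset.sum_sub_distrib, sum_measureReal_fiber_mul_div hf hg hh, sub_self] at hpointwise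
  simp only [mul_sub, mul_add, Finset.sum_sub_distrib, Finset.sum_add_distrib] at hpointwise
  simp only [condEntropy, hfgh, hfh, hgh, hh', mul_neg, Finset.sum_neg_distrib]
  linarith

lemma condEntropy_comp_le {κ : Type*} [Fintype κ] (hf : Measurable f) (hg : Measurable g)
    (π : α → κ) :
    condEntropy μ (fun x => π (f x)) g ≤ condEntropy μ f g :=
  sub_le_sub_right (shannonEntropy_comp_le (hf.prodMk hg) (Prod.map π id)) _

lemma condEntropy_le_condEntropy_comp (hf : Measurable f) (hg : Measurable g) {π : β → γ}
    (hπ : Measurable π) :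
    condEntropy μ f g ≤ condEntropy μ f (fun x => π (g x)) := by
  have hπg : Measurable fun x => π (g x) := hπ.comp hg
  have hsub := condEntropy_prodMk_le (μ := μ) hf hg hπg
  have hfg : shannonEntropy μ (fun x => (f x, g x)) ≤
      shannonEntropy μ (fun x => ((f x, g x), π (g x))) :=
    shannonEntropy_comp_le ((hf.prodMk hg).prodMk hπg) Prod.fst
  have hgπ : shannonEntropy μ (fun x => (g x, π (g x))) ≤ shannonEntropy μ g :=
    shannonEntropy_comp_le hg fun j => (j, π j)
  simp only [condEntropy] at hsub ⊢
  linarith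

lemma condEntropy_self (hf : Measurable f) : condEntropy μ f f = 0 :=
  sub_eq_zero.2 <| le_antisymm (shannonEntropy_comp_le hf fun i => (i, i))
    (shannonEntropy_comp_le (hf.prodMk hf) Prod.fst)

lemma tendsto_condEntropy_of_tendsto_measureReal_ne {ι : Type*} {l : Filter ι} {F : ι → Ω → α}
    (hF : ∀ i, Measurable (F i)) (hf : Measurable f)
    (h : Tendsto (fun i => μ.real {x | f x ≠ F i x}) l (𝓝 0)) :
    Tendsto (fun i => condEntropy μ f (F i)) l (𝓝 0) := by
  simp only [ne_comm (a := f _)] at h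
  rw [← condEntropy_self (μ := μ) hf]
  refine (tendsto_shannonEntropy_of_tendsto_measureReal_ne (fun i => hf.prodMk (hF i))
    (hf.prodMk hf) ?_).sub (tendsto_shannonEntropy_of_tendsto_measureReal_ne hF hf h)
  simpa using h

lemma shannonEntropy_le_add_condEntropy (hf : Measurable f) (hg : Measurable g) :
    shannonEntropy μ f ≤ shannonEntropy μ g + condEntropy μ f g := by
  rw [condEntropy, add_sub_cancel]
  exact shannonEntropy_comp_le (hf.prodMk hg) Prod.fst

omit [IsFiniteMeasure μ] in
lemma shannonEntropy_prodMk_le [IsProbabilityMeasure μ] (hf : Measurable f) (hg : Measurable g) :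
    shannonEntropy μ (fun x => (f x, g x)) ≤ shannonEntropy μ f + shannonEntropy μ g := by
  have hfg := condEntropy_prodMk_le (μ := μ) hf hg (measurable_const (a := ()))
  have h := shannonEntropy_comp_le (μ := μ) ((hf.prodMk hg).prodMk (measurable_const (a := ())))
    Prod.fst
  have hf' := shannonEntropy_comp_le (μ := μ) hf fun i => (i, ())
  have hg' := shannonEntropy_comp_le (μ := μ) hg fun i => (i, ())
  simp only [condEntropy, shannonEntropy_const, sub_zero] at hfg
  linarith

end ShannonEntropy

section Itinerary

variable {Ω α β γ : Type*}

/-- The itinerary `(ξ x, ξ (T x), …, ξ (Tⁿ⁻¹ x))` of `x`, whose fibres form the partition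
`P ∨ T⁻¹P ∨ ⋯ ∨ T⁻⁽ⁿ⁻¹⁾P` when `P` is the partition into the fibres of `ξ`. -/
def itinerary (T : Ω → Ω) (ξ : Ω → α) (n : ℕ) (x : Ω) : Fin n → α :=
  fun j => ξ (T^[j] x)

lemma itinerary_add (T : Ω → Ω) (ξ : Ω → α) (m n : ℕ) (x : Ω) :
    itinerary T ξ (m + n) x = Fin.append (itinerary T ξ m x) (itinerary T ξ n (T^[m] x)) := by
  ext j
  refine Fin.addCases (fun i => ?_) (fun i => ?_) j
  · simp [itinerary]
  · simp [itinerary, Nat.add_comm m, Function.iterate_add_apply]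

variable [MeasurableSpace Ω] {μ : Measure Ω} {T : Ω → Ω}

lemma measurable_itinerary [MeasurableSpace α] (hT : Measurable T) {ξ : Ω → α}
    (hξ : Measurable ξ) (n : ℕ) : Measurable (itinerary T ξ n) :=
  measurable_pi_lambda _ fun j => hξ.comp (hT.iterate j)

variable [Fintype α] [MeasurableSpace α] [MeasurableSingletonClass α]
  [Fintype β] [MeasurableSpace β] [MeasurableSingletonClass β]
  [Fintype γ] [MeasurableSpace γ] [MeasurableSingletonClass γ]

lemma condEntropy_itinerary_le [IsFiniteMeasure μ] (hT : Measurable T) {η : Ω → β}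
    (hη : Measurable η) {g : Ω → γ} (hg : Measurable g) {c : ℝ} (n : ℕ)
    (hc : ∀ j < n, condEntropy μ (fun x => η (T^[j] x)) g ≤ c) :
    condEntropy μ (itinerary T η n) g ≤ n * c := by
  induction n with
  | zero =>
    have hconst : itinerary T η 0 = fun _ => finZeroElim := funext fun _ => Subsingleton.elim _ _
    rw [hconst, Nat.cast_zero, zero_mul, condEntropy, sub_nonpos]
    exact shannonEntropy_comp_le hg fun k => (finZeroElim, k)
  | succ n ih =>
    have hηn : Measurable fun x => η (T^[n] x) := hη.comp (hT.iterate n)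
    have hitin := measurable_itinerary hT hη n
    have hsnoc : itinerary T η (n + 1) =
        fun x => Fin.append (itinerary T η n x) fun _ : Fin 1 => η (T^[n] x) :=
      funext fun x => (itinerary_add T η n 1 x).trans <|
        congrArg _ <| funext fun i => by simp [itinerary]
    calc condEntropy μ (itinerary T η (n + 1)) g
        ≤ condEntropy μ (fun x => (itinerary T η n x, η (T^[n] x))) g := by
          rw [hsnoc]
          exact condEntropy_comp_le (hitin.prodMk hηn) hg
            fun p : (Fin n → β) × β => Fin.append p.1 fun _ : Fin 1 => p.2
      _ ≤ condEntropy μ (itinerary T η n) g + condEntropy μ (fun x => η (T^[n] x)) g :=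
          condEntropy_prodMk_le hitin hηn hg
      _ ≤ n * c + c := add_le_add (ih fun j hj => hc j (hj.trans n.lt_succ_self))
          (hc n n.lt_succ_self)
      _ = (n + 1 : ℕ) * c := by push_cast; ring

lemma condEntropy_iterate_itinerary_add_le [IsFiniteMeasure μ] (hT : MeasurePreserving T μ μ)
    {ξ : Ω → α} (hξ : Measurable ξ) {η : Ω → β} (hη : Measurable η) {j n : ℕ} (hj : j < n)
    (m : ℕ) :
    condEntropy μ (fun x => η (T^[j] x)) (itinerary T ξ (n + m)) ≤
      condEntropy μ η (itinerary T ξ m) := by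
  let window : (Fin (n + m) → α) → Fin m → α := fun v i => v ⟨i + j, by lia⟩
  have hwindow : (fun x => itinerary T ξ m (T^[j] x)) =
      fun x => window (itinerary T ξ (n + m) x) := by
    ext x i
    simp [window, itinerary, Function.iterate_add_apply]
  calc condEntropy μ (fun x => η (T^[j] x)) (itinerary T ξ (n + m))
      ≤ condEntropy μ (fun x => η (T^[j] x)) (fun x => itinerary T ξ m (T^[j] x)) := by
        rw [hwindow]
        exact condEntropy_le_condEntropy_comp (hη.comp (hT.measurable.iterate j))
          (measurable_itinerary hT.measurable hξ _) (measurable_of_countable window)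
    _ = condEntropy μ η (itinerary T ξ m) :=
        condEntropy_comp_measurePreserving (hT.iterate j) hη
          (measurable_itinerary hT.measurable hξ m)

lemma shannonEntropy_itinerary_le [IsFiniteMeasure μ] (hT : MeasurePreserving T μ μ)
    {ξ : Ω → α} (hξ : Measurable ξ) {η : Ω → β} (hη : Measurable η) (n m : ℕ) :
    shannonEntropy μ (itinerary T η n) ≤
      shannonEntropy μ (itinerary T ξ (n + m)) + n * condEntropy μ η (itinerary T ξ m) :=
  (shannonEntropy_le_add_condEntropy (measurable_itinerary hT.measurable hη n)
      (measurable_itinerary hT.measurable hξ (n + m))).trans <|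
    add_le_add_right (condEntropy_itinerary_le hT.measurable hη
      (measurable_itinerary hT.measurable hξ (n + m)) n
      fun _ hj => condEntropy_iterate_itinerary_add_le hT hξ hη hj m) _

variable [IsProbabilityMeasure μ]

lemma subadditive_shannonEntropy_itinerary (hT : MeasurePreserving T μ μ) {ξ : Ω → α}
    (hξ : Measurable ξ) : Subadditive fun n => shannonEntropy μ (itinerary T ξ n) := by
  intro m n
  have hm := measurable_itinerary hT.measurable hξ m
  have hn := measurable_itinerary hT.measurable hξ n
  have hn' : Measurable fun x => itinerary T ξ n (T^[m] x) := hn.comp (hT.measurable.iterate m)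
  calc shannonEntropy μ (itinerary T ξ (m + n))
      ≤ shannonEntropy μ (fun x => (itinerary T ξ m x, itinerary T ξ n (T^[m] x))) := by
        rw [funext (itinerary_add T ξ m n)]
        exact shannonEntropy_comp_le (hm.prodMk hn')
          fun p : (Fin m → α) × (Fin n → α) => Fin.append p.1 p.2
    _ ≤ shannonEntropy μ (itinerary T ξ m) +
          shannonEntropy μ (fun x => itinerary T ξ n (T^[m] x)) := shannonEntropy_prodMk_le hm hn'
    _ = shannonEntropy μ (itinerary T ξ m) + shannonEntropy μ (itinerary T ξ n) := by
        rw [shannonEntropy_comp_measurePreserving (hT.iterate m) hn]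

/-- The entropy `h_μ(T, ξ) = inf_{n ≥ 1} H_μ(ξ, ξ ∘ T, …, ξ ∘ Tⁿ⁻¹) / n` of `T` relative to the
partition into the fibres of `ξ`. For invariant `μ` the infimum is a limit, but it is the infimum
that is upper semicontinuous in `μ`. -/
noncomputable def entropyRate (T : Ω → Ω) (μ : Measure Ω) (ξ : Ω → α) : ℝ :=
  sInf ((fun n : ℕ => shannonEntropy μ (itinerary T ξ n) / n) '' Ici 1)

omit [MeasurableSpace α] [MeasurableSingletonClass α] in
lemma bddBelow_shannonEntropy_itinerary_div (T : Ω → Ω) (ξ : Ω → α) (s : Set ℕ) :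
    BddBelow ((fun n : ℕ => shannonEntropy μ (itinerary T ξ n) / n) '' s) :=
  ⟨0, forall_mem_image.2 fun _ _ => div_nonneg (shannonEntropy_nonneg _) (Nat.cast_nonneg _)⟩

lemma tendsto_shannonEntropy_itinerary_div (hT : MeasurePreserving T μ μ) {ξ : Ω → α}
    (hξ : Measurable ξ) :
    Tendsto (fun n : ℕ => shannonEntropy μ (itinerary T ξ n) / n) atTop
      (𝓝 (entropyRate T μ ξ)) := by
  have hlim := (subadditive_shannonEntropy_itinerary hT hξ).tendsto_lim
    (image_univ ▸ bddBelow_shannonEntropy_itinerary_div T ξ univ)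
  rwa [Subadditive.lim] at hlim

lemma entropyRate_le_add_condEntropy (hT : MeasurePreserving T μ μ) {ξ : Ω → α}
    (hξ : Measurable ξ) {η : Ω → β} (hη : Measurable η) (m : ℕ) :
    entropyRate T μ η ≤ entropyRate T μ ξ + condEntropy μ η (itinerary T ξ m) := by
  have hlim : Tendsto (fun n : ℕ => shannonEntropy μ (itinerary T ξ n) / n +
        shannonEntropy μ (itinerary T ξ m) / n + condEntropy μ η (itinerary T ξ m)) atTop
      (𝓝 (entropyRate T μ ξ + 0 + condEntropy μ η (itinerary T ξ m))) :=
    ((tendsto_shannonEntropy_itinerary_div hT hξ).add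
      (tendsto_const_div_atTop_nhds_zero_nat _)).add_const _
  rw [add_zero] at hlim
  refine le_of_tendsto_of_tendsto (tendsto_shannonEntropy_itinerary_div hT hη) hlim ?_
  filter_upwards [eventually_gt_atTop 0] with n hn
  have hn' : (0 : ℝ) < n := Nat.cast_pos.2 hn
  rw [← add_div, div_add' _ _ _ hn'.ne']
  gcongr
  linarith [shannonEntropy_itinerary_le hT hξ hη n m,
    subadditive_shannonEntropy_itinerary hT hξ n m]

end Itinerary

section Generator

variable {Ω α β γ : Type*}

lemma exists_ne_comp_subset_iUnion_symmDiff [Nonempty β] (η : Ω → β) (g : Ω → γ)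
    (S : β → Set γ) :
    ∃ f : γ → β, {x | η x ≠ f (g x)} ⊆ ⋃ u, symmDiff (g ⁻¹' S u) (η ⁻¹' {u}) := by
  refine ⟨fun c => Classical.epsilon fun u => c ∈ S u, fun x hx => ?_⟩
  by_contra hunion
  have hmem : ∀ u, g x ∈ S u ↔ η x = u := by simpa [mem_symmDiff, ← xor_def] using hunion
  exact hx ((hmem _).1 (Classical.epsilon_spec (p := fun u => g x ∈ S u) ⟨η x, (hmem _).2 rfl⟩))

/-- The sets determined by finitely many of the labels `ξ (Tʲ x)`. -/
def itinerarySets (T : Ω → Ω) (ξ : Ω → α) : Set (Set Ω) :=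
  {s | ∃ n, ∃ S : Set (Fin n → α), itinerary T ξ n ⁻¹' S = s}

lemma exists_preimage_itinerary_eq_of_le (T : Ω → Ω) (ξ : Ω → α) {m n : ℕ} (hmn : m ≤ n)
    (S : Set (Fin m → α)) :
    ∃ S' : Set (Fin n → α), itinerary T ξ n ⁻¹' S' = itinerary T ξ m ⁻¹' S :=
  ⟨{v | (fun i => v (Fin.castLE hmn i)) ∈ S}, rfl⟩

lemma isSetRing_itinerarySets (T : Ω → Ω) (ξ : Ω → α) : IsSetRing (itinerarySets T ξ) where
  empty_mem := ⟨0, ∅, rfl⟩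
  union_mem := by
    rintro _ _ ⟨m, S, rfl⟩ ⟨n, S', rfl⟩
    obtain ⟨R, hR⟩ := exists_preimage_itinerary_eq_of_le T ξ (le_max_left m n) S
    obtain ⟨R', hR'⟩ := exists_preimage_itinerary_eq_of_le T ξ (le_max_right m n) S'
    exact ⟨max m n, R ∪ R', by rw [preimage_union, hR, hR']⟩
  sdiff_mem := by
    rintro _ _ ⟨m, S, rfl⟩ ⟨n, S', rfl⟩
    obtain ⟨R, hR⟩ := exists_preimage_itinerary_eq_of_le T ξ (le_max_left m n) S
    obtain ⟨R', hR'⟩ := exists_preimage_itinerary_eq_of_le T ξ (le_max_right m n) S'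
    exact ⟨max m n, R \ R', by rw [preimage_sdiff, hR, hR']⟩

variable [mΩ : MeasurableSpace Ω] {μ : Measure Ω} {T : Ω → Ω} [mα : MeasurableSpace α]
  {ξ : Ω → α}

/-- The partition into the fibres of `ξ` is a one-sided generator for `T`: the labels `ξ (Tʲ x)`,
`j ≥ 0`, generate the whole σ-algebra. -/
def IsGenerator (T : Ω → Ω) (ξ : Ω → α) : Prop :=
  ⨆ j : ℕ, mα.comap (fun x => ξ (T^[j] x)) = mΩ

lemma IsGenerator.measurable (hgen : IsGenerator T ξ) : Measurable ξ :=
  measurable_iff_comap_le.2 <| (le_iSup (fun j : ℕ => mα.comap fun x => ξ (T^[j] x)) 0).trans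
    hgen.le

variable [Finite α] [MeasurableSingletonClass α]

lemma IsGenerator.generateFrom_itinerarySets (hT : Measurable T) (hgen : IsGenerator T ξ) :
    MeasurableSpace.generateFrom (itinerarySets T ξ) = mΩ := by
  refine le_antisymm (MeasurableSpace.generateFrom_le ?_) (hgen.symm.le.trans (iSup_le fun j => ?_))
  · rintro _ ⟨n, S, rfl⟩
    exact measurable_itinerary hT hgen.measurable n S.to_countable.measurableSet
  · rintro _ ⟨s, -, rfl⟩
    exact MeasurableSpace.measurableSet_generateFrom ⟨j + 1, {v | v (Fin.last j) ∈ s}, rfl⟩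

lemma IsGenerator.exists_measureReal_ne_lt [IsFiniteMeasure μ] [Nonempty β] [Finite β]
    [MeasurableSpace β] [MeasurableSingletonClass β] (hT : Measurable T) (hgen : IsGenerator T ξ)
    {η : Ω → β} (hη : Measurable η) {ε : ℝ} (hε : 0 < ε) :
    ∃ m, ∃ f : (Fin m → α) → β, μ.real {x | η x ≠ f (itinerary T ξ m x)} < ε := by
  have := Fintype.ofFinite β
  have hcard : 0 < (Fintype.card β : ℝ) := Nat.cast_pos.2 Fintype.card_pos
  have happrox : ∀ u, ∃ t ∈ itinerarySets T ξ,
      μ (symmDiff t (η ⁻¹' {u})) < ENNReal.ofReal (ε / Fintype.card β) := fun u =>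
    exists_measure_symmDiff_lt_of_generateFrom_isSetRing (isSetRing_itinerarySets T ξ)
      ⟨{univ}, countable_singleton _, singleton_subset_iff.2 ⟨0, univ, preimage_univ⟩, by simp⟩
      (hgen.generateFrom_itinerarySets hT).symm (hη (measurableSet_singleton u))
      (ENNReal.ofReal_pos.2 (by positivity))
  choose t ht hμt using happrox
  choose n S hS using ht
  let m := Finset.univ.sup n
  choose R hR using fun u =>
    exists_preimage_itinerary_eq_of_le T ξ (Finset.le_sup (Finset.mem_univ u) : n u ≤ m) (S u)
  obtain ⟨f, hf⟩ := exists_ne_comp_subset_iUnion_symmDiff η (itinerary T ξ m) R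
  refine ⟨m, f, ?_⟩
  calc μ.real {x | η x ≠ f (itinerary T ξ m x)}
      ≤ ∑ u, μ.real (symmDiff (itinerary T ξ m ⁻¹' R u) (η ⁻¹' {u})) :=
        (measureReal_mono hf).trans (measureReal_iUnion_fintype_le _)
    _ < ∑ _u : β, ε / Fintype.card β := by
        refine Finset.sum_lt_sum_of_nonempty Finset.univ_nonempty fun u _ => ?_
        rw [hR, hS]
        exact (ENNReal.lt_ofReal_iff_toReal_lt (measure_ne_top _ _)).1 (hμt u)
    _ = ε := by rw [Finset.sum_const, Finset.card_univ, nsmul_eq_mul, mul_div_cancel₀ _ hcard.ne']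

omit [Finite α]
variable [Fintype α] [Fintype β] [MeasurableSpace β] [MeasurableSingletonClass β]

/-- The Kolmogorov–Sinai theorem: outside a set of small measure `η` is a function of a long
`ξ`-itinerary, so its conditional entropy given that itinerary is small. -/
lemma IsGenerator.entropyRate_le [IsProbabilityMeasure μ] (hT : MeasurePreserving T μ μ)
    (hgen : IsGenerator T ξ) {η : Ω → β} (hη : Measurable η) :
    entropyRate T μ η ≤ entropyRate T μ ξ := by
  have : Nonempty β := μ.nonempty_of_neZero.map η
  obtain ⟨ε, -, hε, hε0⟩ := exists_seq_strictAnti_tendsto (0 : ℝ)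
  choose m f hf using fun k =>
    hgen.exists_measureReal_ne_lt (μ := μ) hT.measurable hη (hε k)
  have hitin := fun k => measurable_itinerary hT.measurable hgen.measurable (m k)
  have hcond : Tendsto (fun k => condEntropy μ η fun x => f k (itinerary T ξ (m k) x)) atTop
      (𝓝 0) :=
    tendsto_condEntropy_of_tendsto_measureReal_ne
      (fun k => (measurable_of_countable (f k)).comp (hitin k)) hη
      (squeeze_zero (fun _ => measureReal_nonneg) (fun k => (hf k).le) hε0)
  refine ge_of_tendsto (add_zero (entropyRate T μ ξ) ▸ hcond.const_add _) (.of_forall fun k => ?_)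
  exact (entropyRate_le_add_condEntropy hT hgen.measurable hη (m k)).trans <|
    add_le_add_right
      (condEntropy_le_condEntropy_comp hη (hitin k) (measurable_of_countable (f k))) _

end Generator

section KolmogorovSinai

variable {Ω α : Type*} [MeasurableSpace Ω] {μ : Measure Ω} {T : Ω → Ω} [Fintype α]

lemma partInfo_comp_injective [IsZeroOrProbabilityMeasure μ] (T : Ω → Ω) (ξ : Ω → α) {e : α → ℕ}
    (he : Function.Injective e) (n : ℕ) :
    partInfo T μ (fun x => e (ξ x)) n = ENNReal.ofReal (shannonEntropy μ (itinerary T ξ n)) := by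
  let code : (Fin n → α) → List ℕ := fun v => List.ofFn fun j => e (v j)
  have hcode : Function.Injective code := fun v w h =>
    funext fun j => he (congrFun (List.ofFn_injective h) j)
  have hword : (fun x => (List.range n).map fun j => e (ξ (T^[j] x))) =
      fun x => code (itinerary T ξ n x) :=
    funext fun x => List.ext_getElem (by simp [code]) fun i _ _ => by simp [code, itinerary]
  have hsupp : Function.support (fun l => ENNReal.ofReal (Real.negMulLog
      (μ ((fun x => code (itinerary T ξ n x)) ⁻¹' {l})).toReal)) ⊆ range code := by
    intro l hl
    by_contra hlrange
    have hempty : (fun x => code (itinerary T ξ n x)) ⁻¹' {l} = ∅ :=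
      eq_empty_of_forall_notMem fun x hx => hlrange ⟨_, hx⟩
    exact hl (by simp only [hempty, measure_empty, ENNReal.toReal_zero, Real.negMulLog_zero,
      ENNReal.ofReal_zero])
  rw [partInfo, hword, ← hcode.tsum_eq hsupp, tsum_fintype, shannonEntropy,
    ENNReal.ofReal_sum_of_nonneg fun _ _ =>
      Real.negMulLog_nonneg measureReal_nonneg measureReal_le_one]
  refine Finset.sum_congr rfl fun v _ => ?_
  have hfiber : (fun x => code (itinerary T ξ n x)) ⁻¹' {code v} = itinerary T ξ n ⁻¹' {v} :=
    ext fun x => hcode.eq_iff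
  rw [hfiber, Measure.real]

variable [IsProbabilityMeasure μ] [MeasurableSpace α] [MeasurableSingletonClass α] {ξ : Ω → α}

lemma liminf_partInfo_div (hT : MeasurePreserving T μ μ) (hξ : Measurable ξ) {e : α → ℕ}
    (he : Function.Injective e) :
    atTop.liminf (fun n : ℕ => partInfo T μ (fun x => e (ξ x)) n / (n : ℝ≥0∞)) =
      ENNReal.ofReal (entropyRate T μ ξ) := by
  refine (Tendsto.congr' ?_
    (ENNReal.tendsto_ofReal (tendsto_shannonEntropy_itinerary_div hT hξ))).liminf_eq
  filter_upwards [eventually_gt_atTop 0] with n hn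
  rw [partInfo_comp_injective T ξ he, ENNReal.ofReal_div_of_pos (Nat.cast_pos.2 hn),
    ENNReal.ofReal_natCast]

lemma ksEntropy_eq_of_isGenerator (hT : MeasurePreserving T μ μ) (hgen : IsGenerator T ξ) :
    ksEntropy T μ = ENNReal.ofReal (entropyRate T μ ξ) := by
  refine le_antisymm (iSup_le fun P => iSup₂_le fun hP hfin => ?_) ?_
  · have := hfin.fintype
    have hP' : Measurable (rangeFactorization P) := hP.subtype_mk
    have hlim := liminf_partInfo_div hT hP' Subtype.val_injective
    simp only [rangeFactorization_coe] at hlim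
    exact hlim.trans_le (ENNReal.ofReal_le_ofReal (hgen.entropyRate_le hT hP'))
  · obtain ⟨e, he⟩ := exists_injective_nat α
    rw [← liminf_partInfo_div hT hgen.measurable he]
    exact le_iSup_of_le (fun x => e (ξ x)) <|
      le_iSup₂_of_le ((measurable_of_countable e).comp hgen.measurable)
        ((finite_range e).subset (range_comp_subset_range ξ e)) le_rfl

lemma biSup_ksEntropy_eq (hgen : IsGenerator T ξ) (p : Measure Ω → Prop) :
    ⨆ μ ∈ {μ : Measure Ω | IsProbabilityMeasure μ ∧ MeasurePreserving T μ μ ∧ p μ},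
        ksEntropy T μ =
      ⨆ μ ∈ {μ : ProbabilityMeasure Ω | MeasurePreserving T (μ : Measure Ω) μ ∧ p μ},
        ENNReal.ofReal (entropyRate T (μ : Measure Ω) ξ) := by
  refine le_antisymm (iSup₂_le fun μ ⟨hprob, hT, hp⟩ => ?_) (iSup₂_le fun μ ⟨hT, hp⟩ => ?_)
  · rw [ksEntropy_eq_of_isGenerator hT hgen]
    exact le_iSup₂_of_le ⟨μ, hprob⟩ ⟨hT, hp⟩ le_rfl
  · rw [← ksEntropy_eq_of_isGenerator hT hgen]
    exact le_iSup₂_of_le (μ : Measure Ω) ⟨μ.2, hT, hp⟩ le_rfl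

end KolmogorovSinai

section Semicontinuity

lemma tendsto_biSup_of_antitone_isClosed {M L κ : Type*} [TopologicalSpace M] [CompactSpace M]
    [CompleteLinearOrder L] [DenselyOrdered L] [TopologicalSpace L] [OrderTopology L] [Preorder κ]
    [IsDirectedOrder κ] [Nonempty κ] {f : M → L} (hf : UpperSemicontinuous f) {K : κ → Set M}
    (hK : Antitone K) (hclosed : ∀ n, IsClosed (K n)) :
    Tendsto (fun n => ⨆ x ∈ K n, f x) atTop (𝓝 (⨆ x ∈ ⋂ n, K n, f x)) := by
  have hanti : Antitone fun n => ⨆ x ∈ K n, f x := fun _ _ h => biSup_mono fun _ hx => hK h hx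
  suffices heq : ⨆ x ∈ ⋂ n, K n, f x = ⨅ n, ⨆ x ∈ K n, f x from heq ▸ tendsto_atTop_iInf hanti
  refine le_antisymm (le_iInf fun n => biSup_mono fun x hx => mem_iInter.1 hx n)
    (le_of_forall_lt_imp_le_of_dense fun c hc => ?_)
  have hsuper : Antitone fun n => K n ∩ f ⁻¹' Ici c := fun _ _ h => inter_subset_inter_left _ (hK h)
  have hne : ∀ n, (K n ∩ f ⁻¹' Ici c).Nonempty := fun n => by
    obtain ⟨x, hx, hcx⟩ := lt_biSup_iff.1 (hc.trans_le (iInf_le _ n))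
    exact ⟨x, hx, hcx.le⟩
  have hsuper_closed : ∀ n, IsClosed (K n ∩ f ⁻¹' Ici c) := fun n =>
    (hclosed n).inter (hf.isClosed_preimage c)
  obtain ⟨x, hx⟩ := IsCompact.nonempty_iInter_of_directed_nonempty_isCompact_isClosed _
    hsuper.directed_ge hne (fun n => (hsuper_closed n).isCompact) hsuper_closed
  rw [mem_iInter] at hx
  exact le_iSup₂_of_le x (mem_iInter.2 fun n => (hx n).1) (hx (Classical.arbitrary κ)).2

variable {Ω α : Type*} [TopologicalSpace Ω] {T : Ω → Ω} {ξ : Ω → α}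

lemma continuous_itinerary [TopologicalSpace α] (hT : Continuous T) (hξ : Continuous ξ) (n : ℕ) :
    Continuous (itinerary T ξ n) :=
  continuous_pi fun j => hξ.comp (hT.iterate j)

variable [MeasurableSpace Ω] [HasOuterApproxClosed Ω]

lemma continuous_measureReal_of_isClopen [OpensMeasurableSpace Ω] {E : Set Ω} (hE : IsClopen E) :
    Continuous fun μ : ProbabilityMeasure Ω => (μ : Measure Ω).real E := by
  refine continuous_iff_continuousAt.2 fun μ => ?_
  exact (ENNReal.tendsto_toReal (measure_ne_top _ _)).comp
    (ProbabilityMeasure.tendsto_measure_of_null_frontier_of_tendsto' tendsto_id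
      (by rw [hE.frontier_eq, measure_empty]))

variable [Fintype α] [TopologicalSpace α] [DiscreteTopology α]

lemma continuous_shannonEntropy [OpensMeasurableSpace Ω] (hξ : Continuous ξ) :
    Continuous fun μ : ProbabilityMeasure Ω => shannonEntropy (μ : Measure Ω) ξ :=
  continuous_finsetSum _ fun i _ => Real.continuous_negMulLog.comp <|
    continuous_measureReal_of_isClopen ((isClopen_discrete {i}).preimage hξ)

lemma upperSemicontinuous_entropyRate [OpensMeasurableSpace Ω] (hT : Continuous T)
    (hξ : Continuous ξ) :
    UpperSemicontinuous fun μ : ProbabilityMeasure Ω => entropyRate T (μ : Measure Ω) ξ := by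
  simp only [entropyRate, sInf_image']
  refine upperSemicontinuous_ciInf (fun μ => ?_) fun n =>
    ((continuous_shannonEntropy (continuous_itinerary hT hξ n)).div_const _).upperSemicontinuous
  simpa only [image_eq_range] using
    bddBelow_shannonEntropy_itinerary_div (μ := (μ : Measure Ω)) T ξ (Ici 1)

omit [Fintype α] [TopologicalSpace α] [DiscreteTopology α] in
lemma isClosed_setOf_measurePreserving [BorelSpace Ω] (hT : Continuous T) :
    IsClosed {μ : ProbabilityMeasure Ω | MeasurePreserving T (μ : Measure Ω) μ} := by
  have hfixed : {μ : ProbabilityMeasure Ω | MeasurePreserving T (μ : Measure Ω) μ} =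
      {μ | μ.map hT.aemeasurable = μ} := by
    ext μ
    exact ⟨fun h => Subtype.ext h.map_eq, fun h => ⟨hT.measurable, congrArg Subtype.val h⟩⟩
  rw [hfixed]
  exact isClosed_eq (ProbabilityMeasure.continuous_map hT) continuous_id

end Semicontinuity

section Shift

lemma shift_iterate_apply (j : ℕ) (x : ℕ → Bool) (n : ℕ) : (shift^[j] x) n = x (n + j) := by
  induction j generalizing n with
  | zero => rfl
  | succ j ih => rw [Function.iterate_succ_apply', shift, ih, Nat.add_right_comm, Nat.add_assoc]

lemma continuous_shift : Continuous shift :=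
  continuous_pi fun n => continuous_apply (n + 1)

lemma isGenerator_shift : IsGenerator shift fun x => x 0 := by
  simp only [IsGenerator, shift_iterate_apply, zero_add]
  rfl

lemma isClopen_cyl (w : List Bool) : IsClopen (cyl w) := by
  rw [cyl, ofPred_forall]
  exact isClopen_iInter_of_finite fun i => (isClopen_discrete {w.get i}).preimage
    (continuous_apply (i : ℕ))

end Shift

theorem approximation_of_maximal_entropy_general {Ω α ι κ : Type*} [TopologicalSpace Ω]
    [CompactSpace Ω] [T2Space Ω] [HasOuterApproxClosed Ω] [MeasurableSpace Ω] [BorelSpace Ω]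
    [Finite α] [TopologicalSpace α] [DiscreteTopology α] [MeasurableSpace α]
    [MeasurableSingletonClass α] [Preorder κ] [IsDirectedOrder κ] [Nonempty κ] {T : Ω → Ω}
    (hT : Continuous T) {ξ : Ω → α} (hξ : Continuous ξ) (hgen : IsGenerator T ξ) {E : ι → Set Ω}
    (hE : ∀ i, IsClopen (E i)) (I : Set ι) (ℓ : ι → κ) (a : ι → ℝ) :
    Tendsto (fun n => ⨆ μ ∈ {μ : Measure Ω | IsProbabilityMeasure μ ∧ MeasurePreserving T μ μ ∧
          ∀ i ∈ I, ℓ i ≤ n → μ.real (E i) = a i}, ksEntropy T μ) atTop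
      (𝓝 (⨆ μ ∈ {μ : Measure Ω | IsProbabilityMeasure μ ∧ MeasurePreserving T μ μ ∧
          ∀ i ∈ I, μ.real (E i) = a i}, ksEntropy T μ)) := by
  have := Fintype.ofFinite α
  simp only [biSup_ksEntropy_eq hgen]
  let K (n : κ) : Set (ProbabilityMeasure Ω) := {μ | MeasurePreserving T (μ : Measure Ω) μ ∧
    ∀ i ∈ I, ℓ i ≤ n → (μ : Measure Ω).real (E i) = a i}
  have hanti : Antitone K := fun _ _ hmn μ hμ =>
    ⟨hμ.1, fun i hi him => hμ.2 i hi (him.trans hmn)⟩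
  have hclosed : ∀ n, IsClosed (K n) := fun n => by
    simp only [K, ofPred_and, ofPred_forall]
    exact (isClosed_setOf_measurePreserving hT).inter <| isClosed_iInter fun i =>
      isClosed_iInter fun _ => isClosed_iInter fun _ =>
        isClosed_eq (continuous_measureReal_of_isClopen (hE i)) continuous_const
  have hinter : ⋂ n, K n = {μ : ProbabilityMeasure Ω | MeasurePreserving T (μ : Measure Ω) μ ∧
      ∀ i ∈ I, (μ : Measure Ω).real (E i) = a i} := by
    refine Subset.antisymm (fun μ hμ => ?_) (subset_iInter fun n μ hμ =>
      ⟨hμ.1, fun i hi _ => hμ.2 i hi⟩)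
    rw [mem_iInter] at hμ
    exact ⟨(hμ (Classical.arbitrary κ)).1, fun i hi => (hμ (ℓ i)).2 i hi le_rfl⟩
  rw [← hinter]
  exact tendsto_biSup_of_antitone_isClosed (ENNReal.continuous_ofReal.comp_upperSemicontinuous
    (upperSemicontinuous_entropyRate hT hξ) ENNReal.ofReal_mono) hanti hclosed

/-- **Proposition 5.2.** The maximal entropy over `M(a,W)` is approximated by the maximal
entropies over `M(a,W_n)`, where `W_n = {w ∈ W : |w| ≤ n}`:
`lim_n max{h_μ : μ ∈ M(a,W_n)} = max{h_μ : μ ∈ M(a,W)}`. -/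
theorem approximation_of_maximal_entropy (I : Set ℕ) (w : ℕ → List Bool) (a : ℕ → ℝ)
    (ha : ∀ i ∈ I, 0 ≤ a i)
    (hne : {μ : Measure (ℕ → Bool) | IsProbabilityMeasure μ ∧
        MeasurePreserving shift μ μ ∧ ∀ i ∈ I, (μ (cyl (w i))).toReal = a i}.Nonempty) :
    Filter.Tendsto (fun n : ℕ =>
        ⨆ μ ∈ {μ : Measure (ℕ → Bool) | IsProbabilityMeasure μ ∧
            MeasurePreserving shift μ μ ∧
            ∀ i ∈ I, (w i).length ≤ n → (μ (cyl (w i))).toReal = a i},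
          ksEntropy shift μ)
      Filter.atTop
      (nhds (⨆ μ ∈ {μ : Measure (ℕ → Bool) | IsProbabilityMeasure μ ∧
          MeasurePreserving shift μ μ ∧ ∀ i ∈ I, (μ (cyl (w i))).toReal = a i},
        ksEntropy shift μ)) :=
  approximation_of_maximal_entropy_general continuous_shift (continuous_apply 0) isGenerator_shift
    (fun i => isClopen_cyl (w i)) I (fun i => (w i).length) a
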